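/- Let S be the quotient of the free associative ℂ-algebra on generators S₀, S₁, S₂, S₃ by the two-sided ideal generated by the three elements S_ℓ S_m − S_m S_ℓ − i·(S₀ S_k + S_k S₀), one for each cyclic permutation (k,ℓ,m) of (1,2,3). Then the image in S of C₁ = S₀² + S₁² + S₂² + S₃² is central, i.e. commutes with every element of S. -/

import Mathlib

/-- The four generators `S₀, S₁, S₂, S₃` of the free algebra. -/
noncomputable def s13 : Fin 4 → FreeAlgebra ℂ (Fin 4) := fun i => FreeAlgebra.ι ℂ i

/-- The "self-duality" half of the Sklyanin relations: for each cyclic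
permutation `(k,ℓ,m)` of `(1,2,3)`, `[S_ℓ, S_m] = i [S₀, S_k]₊`. -/
def rel13 : FreeAlgebra ℂ (Fin 4) → FreeAlgebra ℂ (Fin 4) → Prop := fun a b =>
  b = 0 ∧
  (a = s13 2 * s13 3 - s13 3 * s13 2 - Complex.I • (s13 0 * s13 1 + s13 1 * s13 0) ∨
   a = s13 3 * s13 1 - s13 1 * s13 3 - Complex.I • (s13 0 * s13 2 + s13 2 * s13 0) ∨
   a = s13 1 * s13 2 - s13 2 * s13 1 - Complex.I • (s13 0 * s13 3 + s13 3 * s13 0))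

/-!
Write `x ⊙ y` for the anticommutator; then `⁅x ^ 2, a⁆ = ⁅x, x ⊙ a⁆ = x ⊙ ⁅x, a⁆`. With `a = S₀` and
`x, y, z` a cyclic permutation of `S₁, S₂, S₃`, the relation `⁅y, z⁆ = c (a ⊙ x)` turns
`c ⁅x² + y² + z², a⁆` into the Jacobi sum of `x, y, z`, and turns `⁅y² + z², x⁆` into
`c (z ⊙ (a ⊙ y) - y ⊙ (a ⊙ z)) = c ⁅a, ⁅y, z⁆⁆ = c² ⁅a², x⁆`. Hence `x² + y² + z² - c² a²` commutes
with every generator; `C₁` is the case `c = i`.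
-/

section SelfDualSklyanin

attribute [local instance] LieRing.ofAssociativeRing

/-- The anticommutator `x * y + y * x`, denoted `[x, y]₊` in the Sklyanin relations and `x ⊙ y`
below. -/
def anticommutator {A : Type*} [Mul A] [Add A] (x y : A) : A := x * y + y * x

local infix:70 "⊙" => anticommutator

theorem anticommutator_comm {A : Type*} [Mul A] [AddCommMagma A] (x y : A) : x ⊙ y = y ⊙ x :=
  add_comm _ _

theorem anticommutator_neg {A : Type*} [NonUnitalNonAssocRing A] (x y : A) :
    x ⊙ (-y) = -(x ⊙ y) := by
  simp only [anticommutator, mul_neg, neg_mul, neg_add]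

theorem anticommutator_smul {R A : Type*} [NonUnitalNonAssocSemiring A] [DistribSMul R A]
    [IsScalarTower R A A] [SMulCommClass R A A] (c : R) (x y : A) :
    x ⊙ (c • y) = c • (x ⊙ y) := by
  simp only [anticommutator, mul_smul_comm, smul_mul_assoc, smul_add]

variable {R A : Type*} [CommRing R] [Ring A] [Algebra R A]

theorem sq_lie_eq_lie_anticommutator (x y : A) : ⁅x ^ 2, y⁆ = ⁅x, x ⊙ y⁆ := by
  simp only [Ring.lie_def, anticommutator]
  noncomm_ring

theorem sq_lie_eq_anticommutator_lie (x y : A) : ⁅x ^ 2, y⁆ = x ⊙ ⁅x, y⁆ := by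
  simp only [Ring.lie_def, anticommutator]
  noncomm_ring

theorem anticommutator_anticommutator_sub (a y z : A) :
    z ⊙ (a ⊙ y) - y ⊙ (a ⊙ z) = ⁅a, ⁅y, z⁆⁆ := by
  simp only [Ring.lie_def, anticommutator]
  noncomm_ring

/-- The self-duality half of the Sklyanin relations for a family `S₀, S₁, S₂, S₃` in an
`R`-algebra, with an arbitrary scalar `c` in place of the imaginary unit. Cyclic permutations of
`(1, 2, 3)` are encoded by addition in `Fin 3`, the index `k : Fin 3` standing for the generator
`S_{k+1}`. -/
def IsSelfDualSklyanin (c : R) (s : Fin 4 → A) : Prop :=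
  ∀ k : Fin 3, ⁅s (k + 1).succ, s (k + 2).succ⁆ = c • (s 0 ⊙ s k.succ)

/-- The quadratic Casimir element `S₁² + S₂² + S₃² - c² S₀²` of a family satisfying
`IsSelfDualSklyanin c`; it is `C₁` when `c² = -1`. -/
def sklyaninCasimir (c : R) (s : Fin 4 → A) : A :=
  ∑ k : Fin 3, s k.succ ^ 2 - c ^ 2 • s 0 ^ 2

theorem sklyaninCasimir_of_sq_eq_neg_one {c : R} (hc : c ^ 2 = -1) (s : Fin 4 → A) :
    sklyaninCasimir c s = ∑ i, s i ^ 2 := by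
  rw [sklyaninCasimir, hc, neg_one_smul, sub_neg_eq_add, add_comm,
    Fin.sum_univ_succ fun i => s i ^ 2]

namespace IsSelfDualSklyanin

variable {c : R} {s : Fin 4 → A}

theorem smul_sq_lie_zero (hs : IsSelfDualSklyanin c s) (k : Fin 3) :
    c • ⁅s k.succ ^ 2, s 0⁆ = ⁅s k.succ, ⁅s (k + 1).succ, s (k + 2).succ⁆⁆ := by
  rw [hs k, lie_smul c, anticommutator_comm, sq_lie_eq_lie_anticommutator]

theorem smul_sq_zero_lie (hs : IsSelfDualSklyanin c s) (k : Fin 3) :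
    c • ⁅s 0 ^ 2, s k.succ⁆ = ⁅s 0, ⁅s (k + 1).succ, s (k + 2).succ⁆⁆ := by
  rw [hs k, lie_smul c, sq_lie_eq_lie_anticommutator]

theorem sq_add_one_lie (hs : IsSelfDualSklyanin c s) (k : Fin 3) :
    ⁅s (k + 1).succ ^ 2, s k.succ⁆ = -(c • (s (k + 1).succ ⊙ (s 0 ⊙ s (k + 2).succ))) := by
  have h : ⁅s k.succ, s (k + 1).succ⁆ = c • (s 0 ⊙ s (k + 2).succ) := by
    simpa only [add_assoc, Fin.reduceAdd, add_zero] using hs (k + 2)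
  rw [sq_lie_eq_anticommutator_lie, ← lie_skew, h, anticommutator_neg, anticommutator_smul]

theorem sq_add_two_lie (hs : IsSelfDualSklyanin c s) (k : Fin 3) :
    ⁅s (k + 2).succ ^ 2, s k.succ⁆ = c • (s (k + 2).succ ⊙ (s 0 ⊙ s (k + 1).succ)) := by
  have h : ⁅s (k + 2).succ, s k.succ⁆ = c • (s 0 ⊙ s (k + 1).succ) := by
    simpa only [add_assoc, Fin.reduceAdd, add_zero] using hs (k + 1)
  rw [sq_lie_eq_anticommutator_lie, h, anticommutator_smul]

theorem commute_sklyaninCasimir_zero (hs : IsSelfDualSklyanin c s) (hc : IsSMulRegular A c) :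
    Commute (sklyaninCasimir c s) (s 0) := by
  have h_sum : c • ⁅∑ k : Fin 3, s k.succ ^ 2, s 0⁆ = 0 := by
    rw [sum_lie, Finset.smul_sum, Finset.sum_congr rfl fun k _ => hs.smul_sq_lie_zero k,
      Fin.sum_univ_three]
    exact lie_jacobi (s 1) (s 2) (s 3)
  have h_commute : Commute (∑ k : Fin 3, s k.succ ^ 2) (s 0) :=
    commute_iff_lie_eq.mpr (hc.right_eq_zero_of_smul h_sum)
  exact h_commute.sub_left (((Commute.refl (s 0)).pow_left 2).smul_left _)

theorem commute_sklyaninCasimir_succ (hs : IsSelfDualSklyanin c s) (k : Fin 3) :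
    Commute (sklyaninCasimir c s) (s k.succ) := by
  have h_sum : ∑ j : Fin 3, s j.succ ^ 2 =
      s k.succ ^ 2 + s (k + 1).succ ^ 2 + s (k + 2).succ ^ 2 := by
    rw [← Equiv.sum_comp (Equiv.addLeft k), Fin.sum_univ_three]
    simp only [Equiv.coe_addLeft, add_zero]
  have h_self : ⁅s k.succ ^ 2, s k.succ⁆ = 0 :=
    ((Commute.refl _).pow_left 2).lie_eq
  rw [commute_iff_lie_eq]
  calc ⁅sklyaninCasimir c s, s k.succ⁆
      = ⁅s (k + 1).succ ^ 2, s k.succ⁆ + ⁅s (k + 2).succ ^ 2, s k.succ⁆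
          - c • c • ⁅s 0 ^ 2, s k.succ⁆ := by
        rw [sklyaninCasimir, h_sum, sub_lie, add_lie, add_lie, h_self, zero_add, smul_lie, sq c,
          mul_smul]
    _ = c • (s (k + 2).succ ⊙ (s 0 ⊙ s (k + 1).succ) - s (k + 1).succ ⊙ (s 0 ⊙ s (k + 2).succ))
          - c • ⁅s 0, ⁅s (k + 1).succ, s (k + 2).succ⁆⁆ := by
        rw [hs.sq_add_one_lie, hs.sq_add_two_lie, hs.smul_sq_zero_lie, smul_sub, neg_add_eq_sub]
    _ = 0 := by rw [anticommutator_anticommutator_sub, sub_self]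

end IsSelfDualSklyanin

end SelfDualSklyanin

theorem adjoin_range_comp_ι_eq_top {R X B : Type*} [CommSemiring R] [Semiring B] [Algebra R B]
    {f : FreeAlgebra R X →ₐ[R] B} (hf : Function.Surjective f) :
    Algebra.adjoin R (Set.range (f ∘ FreeAlgebra.ι R)) = ⊤ := by
  rw [Set.range_comp, ← AlgHom.map_adjoin, FreeAlgebra.adjoin_range_ι, Algebra.map_top,
    (AlgHom.range_eq_top f).mpr hf]

theorem stmt_13_general {R A : Type*} [CommRing R] [Ring A] [Algebra R A] {c : R}
    (hc : IsSMulRegular A c) {s : Fin 4 → A} (hs : IsSelfDualSklyanin c s)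
    (hgen : Algebra.adjoin R (Set.range s) = ⊤) :
    ∀ y : A, Commute (sklyaninCasimir c s) y := by
  have h_generators : ∀ i, Commute (sklyaninCasimir c s) (s i) :=
    Fin.cases (hs.commute_sklyaninCasimir_zero hc) hs.commute_sklyaninCasimir_succ
  exact fun y => Algebra.commute_of_mem_adjoin_of_forall_mem_commute
    (hgen ▸ Algebra.mem_top) (Set.forall_mem_range.mpr h_generators)

theorem isSelfDualSklyanin_mkAlgHom :
    IsSelfDualSklyanin Complex.I (RingQuot.mkAlgHom ℂ rel13 ∘ s13) := by
  intro k
  rw [← sub_eq_zero]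
  have h_rel : rel13 (⁅s13 (k + 1).succ, s13 (k + 2).succ⁆ -
      Complex.I • anticommutator (s13 0) (s13 k.succ)) 0 := by
    fin_cases k
    exacts [⟨rfl, .inl rfl⟩, ⟨rfl, .inr (.inl rfl)⟩, ⟨rfl, .inr (.inr rfl)⟩]
  simpa only [Ring.lie_def, anticommutator, map_sub, map_smul, map_add, map_mul, map_zero,
    Function.comp_apply] using RingQuot.mkAlgHom_rel ℂ h_rel

theorem sklyaninCasimir_mkAlgHom :
    sklyaninCasimir Complex.I (RingQuot.mkAlgHom ℂ rel13 ∘ s13) =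
      RingQuot.mkAlgHom ℂ rel13 (s13 0 ^ 2 + s13 1 ^ 2 + s13 2 ^ 2 + s13 3 ^ 2) := by
  simp only [sklyaninCasimir_of_sq_eq_neg_one Complex.I_sq, Fin.sum_univ_four, map_add, map_pow,
    Function.comp_apply]

/-- The image of `C₁ = S₀² + S₁² + S₂² + S₃²` is central in the quotient. -/
theorem stmt_13 :
    ∀ y : RingQuot rel13,
      Commute (RingQuot.mkAlgHom ℂ rel13
        (s13 0 ^ 2 + s13 1 ^ 2 + s13 2 ^ 2 + s13 3 ^ 2)) y := by
  rw [← sklyaninCasimir_mkAlgHom]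
  exact stmt_13_general (.of_ne_zero Complex.I_ne_zero) isSelfDualSklyanin_mkAlgHom
    (adjoin_range_comp_ι_eq_top (RingQuot.mkAlgHom_surjective ℂ rel13))
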